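/- If n ≥ q + 1 and C ⊆ [q]^n is a code of size M with at least two codewords and insdel distance d_I(C) = 2n − 2, then M ≤ q. In other words, I_q(n, 2n−2) ≤ q for n ≥ q + 1. -/

import Mathlib

open scoped BigOperators

/-- Length of a longest common subsequence of two words of length `n`. -/
noncomputable def lcsLen {α : Type*} {n : ℕ} (u v : Fin n → α) : ℕ :=
  sSup {ℓ : ℕ | ∃ w : List α, w.length = ℓ ∧ w.Sublist (List.ofFn u) ∧ w.Sublist (List.ofFn v)}

/-- Insdel distance between two words of length `n`: `d_I(u,v) = 2n - 2·ℓ_LCS(u,v)`. -/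
noncomputable def insdelDist {α : Type*} {n : ℕ} (u v : Fin n → α) : ℕ :=
  2 * n - 2 * lcsLen u v

/-- Minimum insdel distance of a code. -/
noncomputable def insdelDistSet {α : Type*} {n : ℕ} (C : Set (Fin n → α)) : ℕ :=
  sInf {d : ℕ | ∃ u ∈ C, ∃ v ∈ C, u ≠ v ∧ insdelDist u v = d}

/-- Minimum Hamming distance of a code. -/
noncomputable def hammingDistSet {α : Type*} {n : ℕ} [DecidableEq α] (C : Set (Fin n → α)) : ℕ :=
  sInf {d : ℕ | ∃ u ∈ C, ∃ v ∈ C, u ≠ v ∧ hammingDist u v = d}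


/-- `I_q(n,d)`: the largest size of a code in `[q]^n` with insdel distance at least `d`. -/
noncomputable def maxInsdelSize (q n d : ℕ) : ℕ :=
  sSup {M : ℕ | ∃ C : Finset (Fin n → Fin q), C.card = M ∧
    ∀ u ∈ C, ∀ v ∈ C, u ≠ v → d ≤ insdelDist u v}

/-!
If `q * k < n`, a word of length `n` over `q` letters repeats some letter `a` at least `k + 1`
times, so `a ⋯ a` (`k + 1` letters) is a subsequence of it. Two codewords sharing such a letter
have a common subsequence of length `k + 1`, hence insdel distance below `2 * n - 2 * k`. In a code
whose distance is at least `2 * n - 2 * k`, choosing such a letter for each codeword is therefore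
an injection into the alphabet; the theorem is the case `k = 1`.
-/

section CommonSubsequence

variable {α : Type*} {n k : ℕ} {u v : Fin n → α}

lemma lcsLen_le : lcsLen u v ≤ n := by
  refine csSup_le' ?_
  rintro _ ⟨w, rfl, hwu, -⟩
  simpa only [List.length_ofFn] using hwu.length_le

lemma length_le_lcsLen {w : List α} (hu : w.Sublist (List.ofFn u)) (hv : w.Sublist (List.ofFn v)) :
    w.length ≤ lcsLen u v := by
  refine le_csSup ⟨n, ?_⟩ ⟨w, rfl, hu, hv⟩
  rintro _ ⟨w', rfl, hw'u, -⟩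
  simpa only [List.length_ofFn] using hw'u.length_le

lemma lcsLen_le_of_le_insdelDist (h : 2 * n - 2 * k ≤ insdelDist u v) : lcsLen u v ≤ k := by
  have hle : lcsLen u v ≤ n := lcsLen_le
  unfold insdelDist at h
  omega

lemma insdelDistSet_le_insdelDist {C : Set (Fin n → α)} (hu : u ∈ C) (hv : v ∈ C) (huv : u ≠ v) :
    insdelDistSet C ≤ insdelDist u v :=
  Nat.sInf_le ⟨u, hu, v, hv, huv, rfl⟩

end CommonSubsequence

section RepeatedLetter

variable {α : Type*} [Fintype α] {n k : ℕ}

lemma exists_replicate_sublist_of_card_mul_lt_length {l : List α}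
    (hl : Fintype.card α * k < l.length) : ∃ a, (List.replicate (k + 1) a).Sublist l := by
  classical
  have hcount : ∑ a, l.count a = l.length := by
    simpa only [Multiset.coe_count, Multiset.coe_card] using
      Multiset.sum_count_eq_card (m := (l : Multiset α)) fun a _ => Finset.mem_univ a
  have hsum : ∑ _a : α, k < ∑ a, l.count a := by
    simpa only [Finset.sum_const, Finset.card_univ, smul_eq_mul, hcount] using hl
  obtain ⟨a, -, ha⟩ := Finset.exists_lt_of_sum_lt hsum
  exact ⟨a, List.replicate_sublist_iff.mpr ha⟩

lemma card_le_card_of_pairwise_lcsLen_le (hn : Fintype.card α * k < n) {C : Finset (Fin n → α)}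
    (hC : (C : Set (Fin n → α)).Pairwise fun u v => lcsLen u v ≤ k) :
    C.card ≤ Fintype.card α := by
  have hrep (u : Fin n → α) : ∃ a, (List.replicate (k + 1) a).Sublist (List.ofFn u) :=
    exists_replicate_sublist_of_card_mul_lt_length (by rwa [List.length_ofFn])
  choose letter hletter using hrep
  have hinj : Set.InjOn letter C := by
    intro u hu v hv huv
    by_contra hne
    have hlong := length_le_lcsLen (hletter u) (huv ▸ hletter v)
    rw [List.length_replicate] at hlong
    exact absurd (hC hu hv hne) (Nat.not_le.mpr hlong)
  exact Finset.card_le_card_of_injOn letter (fun _ _ => Finset.mem_univ _) hinj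

lemma card_le_card_of_pairwise_le_insdelDist (hn : Fintype.card α * k < n)
    {C : Finset (Fin n → α)}
    (hC : (C : Set (Fin n → α)).Pairwise fun u v => 2 * n - 2 * k ≤ insdelDist u v) :
    C.card ≤ Fintype.card α :=
  card_le_card_of_pairwise_lcsLen_le hn fun _ hu _ hv huv =>
    lcsLen_le_of_le_insdelDist (hC hu hv huv)

end RepeatedLetter

theorem size_bound_insdel_large_length_general {q n k : ℕ} (hn : q * k < n) :
    (∀ C : Finset (Fin n → Fin q),
      2 * n - 2 * k ≤ insdelDistSet (C : Set (Fin n → Fin q)) → C.card ≤ q) ∧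
    maxInsdelSize q n (2 * n - 2 * k) ≤ q := by
  have hcard (C : Finset (Fin n → Fin q))
      (hC : (C : Set (Fin n → Fin q)).Pairwise fun u v => 2 * n - 2 * k ≤ insdelDist u v) :
      C.card ≤ q := by
    simpa only [Fintype.card_fin] using
      card_le_card_of_pairwise_le_insdelDist (by rwa [Fintype.card_fin]) hC
  constructor
  · intro C hC
    exact hcard C fun u hu v hv huv => hC.trans (insdelDistSet_le_insdelDist hu hv huv)
  · refine csSup_le' ?_
    rintro _ ⟨C, rfl, hC⟩
    exact hcard C hC

/-- If `n ≥ q + 1` and `C ⊆ [q]^n` has at least two codewords and insdel distance `2n - 2`,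
then `|C| ≤ q`; in other words `I_q(n, 2n-2) ≤ q` for `n ≥ q + 1`. -/
theorem size_bound_insdel_large_length (q n : ℕ) (hq : 2 ≤ q) (hn : q + 1 ≤ n) :
    (∀ C : Finset (Fin n → Fin q), 2 ≤ C.card →
      insdelDistSet (C : Set (Fin n → Fin q)) = 2 * n - 2 →
      C.card ≤ q) ∧
    maxInsdelSize q n (2 * n - 2) ≤ q := by
  obtain ⟨hcode, hmax⟩ := size_bound_insdel_large_length_general (k := 1) (by rwa [mul_one])
  exact ⟨fun C _ hC => hcode C hC.ge, hmax⟩
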